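/- arXiv:1608.08421 — 4 statements merged into one kernel-verified Lean document; each statement's English description precedes it below -/
import Mathlib

section
/- Let X be the isominimal realization in ℛ₂ of a respecting forest P of order 2. Then X is closed under lh and lh₂: for every β ∈ X, both lh(β) = max{γ : β ≤₁ γ} and lh₂(β) = max{γ : β ≤₂ γ} exist and belong to X. Hence isominimal realizations are tight: no ≤₁- or ≤₂-connection from an element of X extends beyond the largest such connection within X. -/
open FirstOrder

/-- The relation symbols of the language of `ℛ₂`: three binary relations. -/
inductive ordRel : ℕ → Type
  | le : ordRel 2
  | le1 : ordRel 2
  | le2 : ordRel 2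

/-- The first-order language with three binary relation symbols `≤`, `≤₁`, `≤₂`. -/
def ordLang : FirstOrder.Language := ⟨fun _ => Empty, ordRel⟩

/-- The `ordLang`-structure on the set of ordinals below `β`, interpreting the three
relation symbols by `≤` and the given relations `le1`, `le2`. -/
def segStr (le1 le2 : Ordinal → Ordinal → Prop) (β : Ordinal) :
    ordLang.Structure {x : Ordinal // x < β} where
  funMap := fun f => Empty.elim f
  RelMap
    | .le => fun v => (v 0).1 ≤ (v 1).1
    | .le1 => fun v => le1 (v 0).1 (v 1).1
    | .le2 => fun v => le2 (v 0).1 (v 1).1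

/-- Σ₁-formulas: a block of existential quantifiers applied to a quantifier-free formula. -/
inductive IsSigma1 {L : FirstOrder.Language} {α : Type} :
    {n : ℕ} → L.BoundedFormula α n → Prop
  | of_isQF {n} {φ : L.BoundedFormula α n} (h : φ.IsQF) : IsSigma1 φ
  | ex {n} {φ : L.BoundedFormula α (n + 1)} (h : IsSigma1 φ) : IsSigma1 φ.ex

/-- Π₁-formulas: a block of universal quantifiers applied to a quantifier-free formula. -/
inductive IsPi1 {L : FirstOrder.Language} {α : Type} :
    {n : ℕ} → L.BoundedFormula α n → Prop
  | of_isQF {n} {φ : L.BoundedFormula α n} (h : φ.IsQF) : IsPi1 φ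
  | all {n} {φ : L.BoundedFormula α (n + 1)} (h : IsPi1 φ) : IsPi1 φ.all

/-- Σ₂-formulas: a block of existential quantifiers applied to a Π₁-formula. -/
inductive IsSigma2 {L : FirstOrder.Language} {α : Type} :
    {n : ℕ} → L.BoundedFormula α n → Prop
  | of_isPi1 {n} {φ : L.BoundedFormula α n} (h : IsPi1 φ) : IsSigma2 φ
  | ex {n} {φ : L.BoundedFormula α (n + 1)} (h : IsSigma2 φ) : IsSigma2 φ.ex

/-- Realization of a formula with `k` parameters in the segment structure below `β`. -/
def RealizeIn (le1 le2 : Ordinal → Ordinal → Prop) (β : Ordinal) {k : ℕ}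
    (φ : ordLang.Formula (Fin k)) (v : Fin k → {x : Ordinal // x < β}) : Prop :=
  letI := segStr le1 le2 β
  φ.Realize v

/-- `a ≤ b` and the segment below `a` is an elementary substructure of the segment below `b`
with respect to the class `C` of formulas (with parameters from below `a`). -/
def ElemSub (C : ∀ k : ℕ, ordLang.Formula (Fin k) → Prop)
    (le1 le2 : Ordinal → Ordinal → Prop) (a b : Ordinal) : Prop :=
  ∃ hab : a ≤ b,
    ∀ (k : ℕ) (φ : ordLang.Formula (Fin k)), C k φ →
      ∀ v : Fin k → {x : Ordinal // x < a},
        RealizeIn le1 le2 a φ v ↔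
          RealizeIn le1 le2 b φ (fun j => ⟨(v j).1, lt_of_lt_of_le (v j).2 hab⟩)

/-- The pair of relations `le1`, `le2` satisfies the simultaneous recursive definition of
`≤₁` and `≤₂` on the ordinals: `α ≤ᵢ β` iff `α ≤ β` and the segment below `α` is a
Σᵢ-elementary substructure of the segment below `β`. -/
def IsR2Pair (le1 le2 : Ordinal → Ordinal → Prop) : Prop :=
  (∀ a b, le1 a b ↔ ElemSub (fun _ φ => IsSigma1 φ) le1 le2 a b) ∧
  (∀ a b, le2 a b ↔ ElemSub (fun _ φ => IsSigma2 φ) le1 le2 a b)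

/-- The strict part of `≤₁`. -/
def Lt1 (le1 : Ordinal → Ordinal → Prop) (a b : Ordinal) : Prop := le1 a b ∧ a ≠ b

/-- The strict part of `≤₂`. -/
def Lt2 (le2 : Ordinal → Ordinal → Prop) (a b : Ordinal) : Prop := le2 a b ∧ a ≠ b

/-- `1^∞`: the least ordinal `ν` such that below `ν` there are `<₂`-chains of every finite
length. -/
noncomputable def OneInfty (le2 : Ordinal → Ordinal → Prop) : Ordinal :=
  sInf {ν : Ordinal | ∀ n : ℕ, ∃ β : Fin n → Ordinal,
    (∀ i, β i < ν) ∧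
    ∀ (i : ℕ) (hi : i + 1 < n), Lt2 le2 (β ⟨i, Nat.lt_of_succ_lt hi⟩) (β ⟨i + 1, hi⟩)}

/-- A respecting forest of order 2: a finite structure with a linear order `≤₀` and partial
orders `≤₁`, `≤₂` which are forests, with `≤₂ ⊆ ≤₁ ⊆ ≤₀`, and `≤ᵢ₊₁` respecting `≤ᵢ`. -/
structure RForest where
  P : Type
  [fintypeP : Fintype P]
  le0 : P → P → Prop
  le1 : P → P → Prop
  le2 : P → P → Prop
  le0_refl : ∀ p, le0 p p
  le0_trans : ∀ p q r, le0 p q → le0 q r → le0 p r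
  le0_antisymm : ∀ p q, le0 p q → le0 q p → p = q
  le0_total : ∀ p q, le0 p q ∨ le0 q p
  le1_refl : ∀ p, le1 p p
  le1_trans : ∀ p q r, le1 p q → le1 q r → le1 p r
  le1_antisymm : ∀ p q, le1 p q → le1 q p → p = q
  le2_refl : ∀ p, le2 p p
  le2_trans : ∀ p q r, le2 p q → le2 q r → le2 p r
  le2_antisymm : ∀ p q, le2 p q → le2 q p → p = q
  le2_sub_le1 : ∀ p q, le2 p q → le1 p q
  le1_sub_le0 : ∀ p q, le1 p q → le0 p q
  forest1 : ∀ p q r, le1 q p → le1 r p → le1 q r ∨ le1 r q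
  forest2 : ∀ p q r, le2 q p → le2 r p → le2 q r ∨ le2 r q
  respects1 : ∀ p q r, le0 p q → le0 q r → le1 p r → le1 p q
  respects2 : ∀ p q r, le1 p q → le1 q r → le2 p r → le2 p q

attribute [instance] RForest.fintypeP

/-- The finite set `X` of ordinals, with the relations induced from `ℛ₂`, is isomorphic to the
respecting forest `F`. -/
def Realizes (le1 le2 : Ordinal → Ordinal → Prop) (F : RForest) (X : Finset Ordinal) : Prop :=
  ∃ e : F.P ≃ {x // x ∈ X}, ∀ p q : F.P,
    (F.le0 p q ↔ ((e p : Ordinal) ≤ (e q : Ordinal))) ∧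
    (F.le1 p q ↔ le1 (e p : Ordinal) (e q : Ordinal)) ∧
    (F.le2 p q ↔ le2 (e p : Ordinal) (e q : Ordinal))

/-- Pointwise comparison of two finite sets of ordinals via their increasing enumerations. -/
def pwLE (X Y : Finset Ordinal) : Prop :=
  ∃ h : X.card = Y.card, ∀ i : Fin X.card,
    ((X.orderIsoOfFin rfl i : {x // x ∈ X}) : Ordinal) ≤
      ((Y.orderIsoOfFin h.symm i : {x // x ∈ Y}) : Ordinal)

/-- `X` is the isominimal realization of the respecting forest `F` in `ℛ₂`: it is isomorphic
to `F` and pointwise minimal among all finite substructures of `ℛ₂` isomorphic to `F`. -/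
def IsIsominimalRealization (le1 le2 : Ordinal → Ordinal → Prop) (F : RForest)
    (X : Finset Ordinal) : Prop :=
  Realizes le1 le2 F X ∧ ∀ Y : Finset Ordinal, Realizes le1 le2 F Y → pwLE X Y

/-- A covering of the respecting forest `F` into `ℛ₂`. -/
def IsCovering (le1 le2 : Ordinal → Ordinal → Prop) (F : RForest)
    (c : F.P → Ordinal) : Prop :=
  (∀ p q, F.le0 p q ↔ c p ≤ c q) ∧
  (∀ p q, F.le1 p q → le1 (c p) (c q)) ∧
  (∀ p q, F.le2 p q → le2 (c p) (c q))


/-- A covering of the respecting forest `F` into the respecting forest `G`. -/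
def ForestCovering (F G : RForest) (f : F.P → G.P) : Prop :=
  (∀ p q, F.le0 p q ↔ G.le0 (f p) (f q)) ∧
  (∀ p q, F.le1 p q → G.le1 (f p) (f q)) ∧
  (∀ p q, F.le2 p q → G.le2 (f p) (f q))

namespace R2

universe u

open FirstOrder.Language

/-- Quantifier-free definable predicates. -/
inductive QD (le1 le2 : Ordinal.{u} → Ordinal.{u} → Prop) {κ : Type} :
    ((κ → Ordinal.{u}) → Prop) → Prop
  | fal : QD le1 le2 (fun _ => False)
  | le (i j : κ) : QD le1 le2 (fun f => f i ≤ f j)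
  | r1 (i j : κ) : QD le1 le2 (fun f => le1 (f i) (f j))
  | r2 (i j : κ) : QD le1 le2 (fun f => le2 (f i) (f j))
  | imp {P Q : (κ → Ordinal.{u}) → Prop} (hP : QD le1 le2 P) (hQ : QD le1 le2 Q) :
      QD le1 le2 (fun f => P f → Q f)

section
variable {le1 le2 : Ordinal.{u} → Ordinal.{u} → Prop} {κ κ' : Type}

theorem QD.congr {P Q : (κ → Ordinal.{u}) → Prop} (hP : QD le1 le2 P) (h : ∀ f, P f ↔ Q f) :
    QD le1 le2 Q := by
  have : P = Q := funext fun f => propext (h f)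
  exact this ▸ hP

theorem QD.neg {P : (κ → Ordinal.{u}) → Prop} (hP : QD le1 le2 P) :
    QD le1 le2 (fun f => ¬ P f) := QD.imp hP QD.fal

theorem QD.and {P Q : (κ → Ordinal.{u}) → Prop} (hP : QD le1 le2 P) (hQ : QD le1 le2 Q) :
    QD le1 le2 (fun f => P f ∧ Q f) :=
  (QD.neg (QD.imp hP hQ.neg)).congr fun f => by tauto

theorem QD.iff {P Q : (κ → Ordinal.{u}) → Prop} (hP : QD le1 le2 P) (hQ : QD le1 le2 Q) :
    QD le1 le2 (fun f => P f ↔ Q f) :=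
  ((QD.imp hP hQ).and (QD.imp hQ hP)).congr fun f => by tauto

theorem QD.tru : QD le1 le2 (fun _ : κ → Ordinal.{u} => True) :=
  (QD.neg QD.fal).congr fun f => by tauto

theorem QD.const (D : Prop) : QD le1 le2 (fun _ : κ → Ordinal.{u} => D) := by
  by_cases h : D
  · exact QD.tru.congr fun f => by tauto
  · exact QD.fal.congr fun f => by tauto

theorem QD.all {ι : Type} [Finite ι] {P : ι → (κ → Ordinal.{u}) → Prop}
    (hP : ∀ i, QD le1 le2 (P i)) : QD le1 le2 (fun f => ∀ i, P i f) := by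
  classical
  cases nonempty_fintype ι
  have : ∀ s : Finset ι, QD le1 le2 (fun f => ∀ i ∈ s, P i f) := by
    intro s
    induction s using Finset.induction_on with
    | empty => exact QD.tru.congr fun f => by simp
    | insert a s ha ih => exact ((hP a).and ih).congr fun f => by simp
  exact (this Finset.univ).congr fun f => by simp

theorem QD.subst {P : (κ → Ordinal.{u}) → Prop} (hP : QD le1 le2 P) (σ : κ → κ') :
    QD le1 le2 (fun f : κ' → Ordinal.{u} => P (fun i => f (σ i))) := by
  induction hP with
  | fal => exact QD.fal
  | le i j => exact QD.le _ _
  | r1 i j => exact QD.r1 _ _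
  | r2 i j => exact QD.r2 _ _
  | imp _ _ h1 h2 => exact QD.imp h1 h2

/-- Realization in the segment. -/
def Rz (le1 le2 : Ordinal.{u} → Ordinal.{u} → Prop) (β : Ordinal.{u}) {k n : ℕ}
    (φ : ordLang.BoundedFormula (Fin k) n)
    (v : Fin k → {x : Ordinal.{u} // x < β}) (xs : Fin n → {x : Ordinal.{u} // x < β}) : Prop :=
  letI := segStr le1 le2 β
  φ.Realize v xs

theorem QD.toFormula {k n : ℕ} {P : (κ → Ordinal.{u}) → Prop} (hP : QD le1 le2 P)
    (τ : κ → Fin k ⊕ Fin n) :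
    ∃ φ : ordLang.BoundedFormula (Fin k) n, φ.IsQF ∧ ∀ β v xs,
      (Rz le1 le2 β φ v xs ↔ P (fun i => (Sum.elim v xs (τ i)).1)) := by
  induction hP with
  | fal => exact ⟨⊥, BoundedFormula.isQF_bot, fun β v xs => Iff.rfl⟩
  | le i j =>
    refine ⟨Relations.boundedFormula (L := ordLang) (n := 2) (ordRel.le : ordRel 2)
      ![Term.var (τ i), Term.var (τ j)], ?_, ?_⟩
    · exact (BoundedFormula.IsAtomic.rel _ _).isQF
    intro β v xs
    exact Iff.rfl
  | r1 i j =>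
    refine ⟨Relations.boundedFormula (L := ordLang) (n := 2) (ordRel.le1 : ordRel 2)
      ![Term.var (τ i), Term.var (τ j)], ?_, ?_⟩
    · exact (BoundedFormula.IsAtomic.rel _ _).isQF
    intro β v xs
    exact Iff.rfl
  | r2 i j =>
    refine ⟨Relations.boundedFormula (L := ordLang) (n := 2) (ordRel.le2 : ordRel 2)
      ![Term.var (τ i), Term.var (τ j)], ?_, ?_⟩
    · exact (BoundedFormula.IsAtomic.rel _ _).isQF
    intro β v xs
    exact Iff.rfl
  | imp _ _ h1 h2 =>
    obtain ⟨φ, hφ, h1⟩ := h1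
    obtain ⟨ψ, hψ, h2⟩ := h2
    refine ⟨φ.imp ψ, hφ.imp hψ, fun β v xs => ?_⟩
    have : Rz le1 le2 β (φ.imp ψ) v xs ↔ (Rz le1 le2 β φ v xs → Rz le1 le2 β ψ v xs) := Iff.rfl
    rw [this, h1, h2]

theorem Rz_ex {β : Ordinal.{u}} {k n : ℕ} {φ : ordLang.BoundedFormula (Fin k) (n+1)}
    {v : Fin k → {x : Ordinal.{u} // x < β}} {xs : Fin n → {x : Ordinal.{u} // x < β}} :
    Rz le1 le2 β φ.ex v xs ↔ ∃ y, Rz le1 le2 β φ v (Fin.snoc xs y) := by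
  let := segStr le1 le2 β
  exact BoundedFormula.realize_ex

theorem Rz_all {β : Ordinal.{u}} {k n : ℕ} {φ : ordLang.BoundedFormula (Fin k) (n+1)}
    {v : Fin k → {x : Ordinal.{u} // x < β}} {xs : Fin n → {x : Ordinal.{u} // x < β}} :
    Rz le1 le2 β φ.all v xs ↔ ∀ y, Rz le1 le2 β φ v (Fin.snoc xs y) := Iff.rfl

theorem Rz_exs {β : Ordinal.{u}} {k n : ℕ} {φ : ordLang.BoundedFormula (Fin k) n}
    {v : Fin k → {x : Ordinal.{u} // x < β}} :
    RealizeIn le1 le2 β φ.exs v ↔ ∃ xs, Rz le1 le2 β φ v xs := by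
  let := segStr le1 le2 β
  exact BoundedFormula.realize_exs

theorem Rz_formula {β : Ordinal.{u}} {k : ℕ} {φ : ordLang.Formula (Fin k)}
    {v : Fin k → {x : Ordinal.{u} // x < β}} :
    RealizeIn le1 le2 β φ v ↔ Rz le1 le2 β φ v Fin.elim0 := by
  have : (default : Fin 0 → {x : Ordinal.{u} // x < β}) = Fin.elim0 := Subsingleton.elim _ _
  rw [← this]
  exact Iff.rfl

theorem sigma1_exs {k : ℕ} : ∀ {n : ℕ} {φ : ordLang.BoundedFormula (Fin k) n}, IsSigma1 φ →
    IsSigma1 φ.exs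
  | 0, _, h => h
  | _ + 1, φ, h => sigma1_exs (φ := φ.ex) (IsSigma1.ex h)

theorem sigma2_exs {k : ℕ} : ∀ {n : ℕ} {φ : ordLang.BoundedFormula (Fin k) n}, IsSigma2 φ →
    IsSigma2 φ.exs
  | 0, _, h => h
  | _ + 1, φ, h => sigma2_exs (φ := φ.ex) (IsSigma2.ex h)

theorem sigma1_sigma2 {k n : ℕ} {φ : ordLang.BoundedFormula (Fin k) n} (h : IsSigma1 φ) :
    IsSigma2 φ := by
  induction h with
  | of_isQF h => exact .of_isPi1 (.of_isQF h)
  | ex _ ih => exact .ex ih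

theorem exists_pi1 {k n : ℕ} : ∀ (m : ℕ) (φ : ordLang.BoundedFormula (Fin k) (n + m)), IsPi1 φ →
    ∃ ψ : ordLang.BoundedFormula (Fin k) n, IsPi1 ψ ∧ ∀ (β : Ordinal.{u}) v xs,
      (Rz le1 le2 β ψ v xs ↔ ∀ z : Fin m → _, Rz le1 le2 β φ v (Fin.append xs z))
  | 0, φ, h => ⟨φ, h, fun β v xs => by
      have : ∀ z : Fin 0 → {x : Ordinal.{u} // x < β}, Fin.append xs z = xs := by
        intro z
        have := Fin.append_right_nil xs z rfl
        simpa using this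
      simp [this]⟩
  | m + 1, φ, h => by
    obtain ⟨ψ, hψ, h'⟩ := exists_pi1 m φ.all h.all
    refine ⟨ψ, hψ, fun β v xs => ?_⟩
    rw [h']
    simp only [Rz_all]
    constructor
    · intro H z
      have := H (Fin.init z) (z (Fin.last m))
      rw [← Fin.append_snoc, Fin.snoc_init_self] at this
      exact this
    · intro H z y
      rw [← Fin.append_snoc]
      exact H _

variable (h : IsR2Pair le1 le2)
include h

theorem le_of_1 {a b : Ordinal.{u}} (hab : le1 a b) : a ≤ b := ((h.1 a b).1 hab).1
theorem le_of_2 {a b : Ordinal.{u}} (hab : le2 a b) : a ≤ b := ((h.2 a b).1 hab).1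

theorem le1_of_2 {a b : Ordinal.{u}} (hab : le2 a b) : le1 a b := by
  obtain ⟨h1, h2⟩ := (h.2 a b).1 hab
  exact (h.1 a b).2 ⟨h1, fun k φ hφ v => h2 k φ (sigma1_sigma2 hφ) v⟩

theorem trans1 {a b c : Ordinal.{u}} (hab : le1 a b) (hbc : le1 b c) : le1 a c := by
  obtain ⟨h1, h2⟩ := (h.1 a b).1 hab
  obtain ⟨h3, h4⟩ := (h.1 b c).1 hbc
  exact (h.1 a c).2 ⟨h1.trans h3, fun k φ hφ v => (h2 k φ hφ v).trans (h4 k φ hφ _)⟩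

theorem trans2 {a b c : Ordinal.{u}} (hab : le2 a b) (hbc : le2 b c) : le2 a c := by
  obtain ⟨h1, h2⟩ := (h.2 a b).1 hab
  obtain ⟨h3, h4⟩ := (h.2 b c).1 hbc
  exact (h.2 a c).2 ⟨h1.trans h3, fun k φ hφ v => (h2 k φ hφ v).trans (h4 k φ hφ _)⟩

theorem refl1 (a : Ordinal.{u}) : le1 a a :=
  (h.1 a a).2 ⟨le_rfl, fun _ _ _ _ => Iff.rfl⟩

theorem refl2 (a : Ordinal.{u}) : le2 a a :=
  (h.2 a a).2 ⟨le_rfl, fun _ _ _ _ => Iff.rfl⟩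

/-- Semantic form of Σ₁-reflection. -/
theorem S1 {κ₁ κ₂ : Type} [Finite κ₁] [Finite κ₂] {a b : Ordinal.{u}} (hab : le1 a b)
    {P : (κ₁ ⊕ κ₂ → Ordinal.{u}) → Prop} (hP : QD le1 le2 P)
    (v : κ₁ → Ordinal.{u}) (hv : ∀ i, v i < a) (x : κ₂ → Ordinal.{u}) (hx : ∀ i, x i < b)
    (H : P (Sum.elim v x)) : ∃ x' : κ₂ → Ordinal.{u}, (∀ i, x' i < a) ∧ P (Sum.elim v x') := by
  obtain ⟨k, ⟨e₁⟩⟩ := Finite.exists_equiv_fin κ₁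
  obtain ⟨n, ⟨e₂⟩⟩ := Finite.exists_equiv_fin κ₂
  obtain ⟨φ, hφ, hr⟩ := hP.toFormula (Sum.map e₁ e₂)
  obtain ⟨h1, h2⟩ := (h.1 a b).1 hab
  have := (h2 k φ.exs (sigma1_exs (.of_isQF hφ)) (fun i => ⟨v (e₁.symm i), hv _⟩)).2 (by
    rw [Rz_exs]
    refine ⟨fun i => ⟨x (e₂.symm i), hx _⟩, ?_⟩
    rw [hr]
    convert H using 1
    funext i
    rcases i with i | i <;> simp)
  rw [Rz_exs] at this
  obtain ⟨xs, hxs⟩ := this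
  rw [hr] at hxs
  refine ⟨fun i => (xs (e₂ i)).1, fun i => (xs (e₂ i)).2, ?_⟩
  convert hxs using 1
  funext i
  rcases i with i | i <;> simp

/-- Semantic form of Σ₂-reflection. -/
theorem S2 {κ₁ κ₂ κ₃ : Type} [Finite κ₁] [Finite κ₂] [Finite κ₃] {a b : Ordinal.{u}}
    (hab : le2 a b)
    {P : (κ₁ ⊕ (κ₂ ⊕ κ₃) → Ordinal.{u}) → Prop} (hP : QD le1 le2 P)
    (v : κ₁ → Ordinal.{u}) (hv : ∀ i, v i < a) (x : κ₂ → Ordinal.{u}) (hx : ∀ i, x i < b)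
    (H : ∀ z : κ₃ → Ordinal.{u}, (∀ i, z i < b) → P (Sum.elim v (Sum.elim x z))) :
    ∃ x' : κ₂ → Ordinal.{u}, (∀ i, x' i < a) ∧
      ∀ z : κ₃ → Ordinal.{u}, (∀ i, z i < a) → P (Sum.elim v (Sum.elim x' z)) := by
  obtain ⟨k, ⟨e₁⟩⟩ := Finite.exists_equiv_fin κ₁
  obtain ⟨n, ⟨e₂⟩⟩ := Finite.exists_equiv_fin κ₂
  obtain ⟨m, ⟨e₃⟩⟩ := Finite.exists_equiv_fin κ₃
  obtain ⟨φ, hφ, hr⟩ := hP.toFormula (k := k) (n := n + m)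
    (Sum.map e₁ (Sum.elim (fun i => Fin.castAdd m (e₂ i)) (fun i => Fin.natAdd n (e₃ i))))
  obtain ⟨ψ, hψ, hr'⟩ := exists_pi1 (le1 := le1) (le2 := le2) m φ (.of_isQF hφ)
  obtain ⟨h1, h2⟩ := (h.2 a b).1 hab
  have := (h2 k ψ.exs (sigma2_exs (.of_isPi1 hψ)) (fun i => ⟨v (e₁.symm i), hv _⟩)).2 (by
    rw [Rz_exs]
    refine ⟨fun i => ⟨x (e₂.symm i), hx _⟩, ?_⟩
    rw [hr']
    intro z
    rw [hr]
    convert H (fun i => (z (e₃ i)).1) (fun i => (z (e₃ i)).2) using 1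
    funext i
    rcases i with i | i | i <;> simp)
  rw [Rz_exs] at this
  obtain ⟨xs, hxs⟩ := this
  rw [hr'] at hxs
  refine ⟨fun i => (xs (e₂ i)).1, fun i => (xs (e₂ i)).2, ?_⟩
  intro z hz
  have := hxs (fun i => ⟨z (e₃.symm i), hz _⟩)
  rw [hr] at this
  convert this using 1
  funext i
  rcases i with i | i | i <;> simp

omit h

theorem nf0 {k n : ℕ} {φ : ordLang.BoundedFormula (Fin k) n} (hφ : φ.IsQF) :
    ∃ P : (Fin k ⊕ Fin n → Ordinal.{u}) → Prop, QD le1 le2 P ∧ ∀ β v xs,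
      (Rz le1 le2 β φ v xs ↔ P (fun i => (Sum.elim v xs i).1)) := by
  have ht : ∀ t : ordLang.Term (Fin k ⊕ Fin n), ∃ i, t = Term.var i := by
    intro t
    cases t with
    | var i => exact ⟨i, rfl⟩
    | func f _ => exact Empty.elim f
  induction hφ with
  | falsum => exact ⟨_, QD.fal, fun β v xs => Iff.rfl⟩
  | of_isAtomic hA =>
    cases hA with
    | equal t₁ t₂ =>
      obtain ⟨i, rfl⟩ := ht t₁
      obtain ⟨j, rfl⟩ := ht t₂
      refine ⟨_, (QD.le i j).and (QD.le j i), fun β v xs => ?_⟩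
      have : Rz le1 le2 β ((Term.var i).bdEqual (Term.var j)) v xs ↔
        Sum.elim v xs i = Sum.elim v xs j := Iff.rfl
      rw [this, Subtype.ext_iff, le_antisymm_iff]
    | rel R ts =>
      cases R with
      | le =>
        obtain ⟨i, hi⟩ := ht (ts 0)
        obtain ⟨j, hj⟩ := ht (ts 1)
        refine ⟨_, QD.le i j, fun β v xs => ?_⟩
        let := segStr le1 le2 β
        change ((ts 0).realize (Sum.elim v xs)).1 ≤ ((ts 1).realize (Sum.elim v xs)).1 ↔ _
        rw [hi, hj]; rfl
      | le1 =>
        obtain ⟨i, hi⟩ := ht (ts 0)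
        obtain ⟨j, hj⟩ := ht (ts 1)
        refine ⟨_, QD.r1 i j, fun β v xs => ?_⟩
        let := segStr le1 le2 β
        change le1 ((ts 0).realize (Sum.elim v xs)).1 ((ts 1).realize (Sum.elim v xs)).1 ↔ _
        rw [hi, hj]; rfl
      | le2 =>
        obtain ⟨i, hi⟩ := ht (ts 0)
        obtain ⟨j, hj⟩ := ht (ts 1)
        refine ⟨_, QD.r2 i j, fun β v xs => ?_⟩
        let := segStr le1 le2 β
        change le2 ((ts 0).realize (Sum.elim v xs)).1 ((ts 1).realize (Sum.elim v xs)).1 ↔ _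
        rw [hi, hj]; rfl
  | imp _ _ h1 h2 =>
    obtain ⟨P, hP, h1⟩ := h1
    obtain ⟨Q, hQ, h2⟩ := h2
    refine ⟨_, hP.imp hQ, fun β v xs => ?_⟩
    rw [← h1, ← h2]
    exact Iff.rfl

/-- Variable shift. -/
def shf (k n m : ℕ) : (Fin k ⊕ Fin (n + 1)) ⊕ Fin m → (Fin k ⊕ Fin n) ⊕ Fin (m + 1) :=
  Sum.elim (Sum.elim (fun i => .inl (.inl i))
    (Fin.lastCases (.inr 0) (fun j => .inl (.inr j)))) (fun l => .inr l.succ)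

theorem shf_spec {M : Type*} {k n m : ℕ} (v : Fin k → M) (xs : Fin n → M) (y : M) (z : Fin m → M)
    (i) : Sum.elim (Sum.elim v (Fin.snoc xs y : Fin (n + 1) → M)) z i =
      Sum.elim (Sum.elim v xs) (Fin.cons y z : Fin (m + 1) → M) (shf k n m i) := by
  rcases i with (i | i) | i
  · simp [shf]
  · induction i using Fin.lastCases <;> simp [shf]
  · simp [shf]

theorem nfS {k n : ℕ} {φ : ordLang.BoundedFormula (Fin k) n} (hφ : IsSigma1 φ) :
    ∃ (m : ℕ) (P : ((Fin k ⊕ Fin n) ⊕ Fin m → Ordinal.{u}) → Prop), QD le1 le2 P ∧ ∀ β v xs,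
      (Rz le1 le2 β φ v xs ↔ ∃ z, P (fun i => (Sum.elim (Sum.elim v xs) z i).1)) := by
  induction hφ with
  | of_isQF hφ =>
    obtain ⟨P, hP, hr⟩ := nf0 (le1 := le1) (le2 := le2) hφ
    refine ⟨0, _, hP.subst Sum.inl, fun β v xs => ?_⟩
    rw [hr]
    simp
  | ex _ ih =>
    obtain ⟨m, P, hP, hr⟩ := ih
    refine ⟨m + 1, _, hP.subst (shf _ _ _), fun β v xs => ?_⟩
    rw [Rz_ex, Fin.exists_fin_succ_pi]
    simp only [hr, shf_spec]

theorem nfP {k n : ℕ} {φ : ordLang.BoundedFormula (Fin k) n} (hφ : IsPi1 φ) :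
    ∃ (m : ℕ) (P : ((Fin k ⊕ Fin n) ⊕ Fin m → Ordinal.{u}) → Prop), QD le1 le2 P ∧ ∀ β v xs,
      (Rz le1 le2 β φ v xs ↔ ∀ z, P (fun i => (Sum.elim (Sum.elim v xs) z i).1)) := by
  induction hφ with
  | of_isQF hφ =>
    obtain ⟨P, hP, hr⟩ := nf0 (le1 := le1) (le2 := le2) hφ
    refine ⟨0, _, hP.subst Sum.inl, fun β v xs => ?_⟩
    rw [hr]
    simp
  | all _ ih =>
    obtain ⟨m, P, hP, hr⟩ := ih
    refine ⟨m + 1, _, hP.subst (shf _ _ _), fun β v xs => ?_⟩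
    rw [Rz_all, Fin.forall_fin_succ_pi]
    simp only [hr, shf_spec]

include h

theorem le1_intro {a b : Ordinal.{u}} (hab : a ≤ b)
    (H : ∀ (κ₁ κ₂ : Type) (_ : Finite κ₁) (_ : Finite κ₂)
      (P : (κ₁ ⊕ κ₂ → Ordinal.{u}) → Prop), QD le1 le2 P →
      ∀ v : κ₁ → Ordinal.{u}, (∀ i, v i < a) → ∀ x : κ₂ → Ordinal.{u}, (∀ i, x i < b) →
      P (Sum.elim v x) → ∃ x' : κ₂ → Ordinal.{u}, (∀ i, x' i < a) ∧ P (Sum.elim v x')) :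
    le1 a b := by
  refine (h.1 a b).2 ⟨hab, fun k φ hφ v => ?_⟩
  obtain ⟨m, P, hP, hr⟩ := nfS (le1 := le1) (le2 := le2) hφ
  rw [Rz_formula, Rz_formula, hr, hr]
  constructor
  · rintro ⟨z, hz⟩
    refine ⟨fun i => ⟨(z i).1, (z i).2.trans_le hab⟩, ?_⟩
    convert hz using 1
    funext i
    rcases i with (i | i) | i
    · simp
    · exact i.elim0
    · simp
  · rintro ⟨z, hz⟩
    obtain ⟨x', hx', hx⟩ := H (Fin k ⊕ Fin 0) (Fin m) inferInstance inferInstance P hP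
      (fun i => (Sum.elim v Fin.elim0 i).1) (fun i => (Sum.elim v Fin.elim0 i).2)
      (fun i => (z i).1) (fun i => (z i).2) (by
        convert hz using 1
        funext i
        rcases i with (i | i) | i
        · simp
        · exact i.elim0
        · simp)
    refine ⟨fun i => ⟨x' i, hx' i⟩, ?_⟩
    convert hx using 1
    funext i
    rcases i with (i | i) | i
    · simp
    · exact i.elim0
    · simp

theorem respects1 {a b c : Ordinal.{u}} (hab : a ≤ b) (hbc : b ≤ c) (hac : le1 a c) : le1 a b :=
  le1_intro h hab fun _ _ _ _ _ hP v hv x hx hp =>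
    S1 h hac hP v hv x (fun i => (hx i).trans_le hbc) hp

theorem pi1_up {a b : Ordinal.{u}} (hab : le1 a b) {k n : ℕ}
    {φ : ordLang.BoundedFormula (Fin k) n} (hφ : IsPi1 φ)
    (v : Fin k → {x : Ordinal.{u} // x < a}) (xs : Fin n → {x : Ordinal.{u} // x < a})
    (H : Rz le1 le2 a φ v xs) :
    Rz le1 le2 b φ (fun j => ⟨(v j).1, lt_of_lt_of_le (v j).2 (le_of_1 h hab)⟩)
      (fun j => ⟨(xs j).1, lt_of_lt_of_le (xs j).2 (le_of_1 h hab)⟩) := by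
  obtain ⟨m, P, hP, hr⟩ := nfP (le1 := le1) (le2 := le2) hφ
  rw [hr] at H ⊢
  intro z
  by_contra hn
  obtain ⟨x', hx', hx⟩ := S1 h hab hP.neg (fun i => (Sum.elim v xs i).1)
    (fun i => (Sum.elim v xs i).2) (fun i => (z i).1) (fun i => (z i).2) (by
      intro hh
      apply hn
      convert hh using 1
      funext i
      rcases i with (i | i) | i <;> simp)
  apply hx
  convert H (fun i => ⟨x' i, hx' i⟩) using 1
  funext i
  rcases i with (i | i) | i <;> simp

theorem sigma2_up {a b : Ordinal.{u}} (hab : le1 a b) {k n : ℕ}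
    {φ : ordLang.BoundedFormula (Fin k) n} (hφ : IsSigma2 φ)
    (v : Fin k → {x : Ordinal.{u} // x < a}) (xs : Fin n → {x : Ordinal.{u} // x < a})
    (H : Rz le1 le2 a φ v xs) :
    Rz le1 le2 b φ (fun j => ⟨(v j).1, lt_of_lt_of_le (v j).2 (le_of_1 h hab)⟩)
      (fun j => ⟨(xs j).1, lt_of_lt_of_le (xs j).2 (le_of_1 h hab)⟩) := by
  induction hφ with
  | of_isPi1 hφ => exact pi1_up h hab hφ v xs H
  | ex _ ih =>
    rw [Rz_ex] at H ⊢
    obtain ⟨y, hy⟩ := H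
    refine ⟨⟨y.1, lt_of_lt_of_le y.2 (le_of_1 h hab)⟩, ?_⟩
    convert ih _ hy using 1
    funext i
    induction i using Fin.lastCases <;> simp

theorem respects2 {a b c : Ordinal.{u}} (hab : le1 a b) (hbc : le1 b c) (hac : le2 a c) :
    le2 a b := by
  obtain ⟨h1, h2⟩ := (h.2 a c).1 hac
  refine (h.2 a b).2 ⟨le_of_1 h hab, fun k φ hφ v => ⟨fun H => ?_, fun H => ?_⟩⟩
  · rw [Rz_formula] at H ⊢
    have := sigma2_up h hab hφ _ _ H
    convert this
  · rw [h2 k φ hφ v]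
    rw [Rz_formula] at H ⊢
    have := sigma2_up h hbc hφ _ _ H
    convert this

theorem lim_of_lt1 {a b : Ordinal.{u}} (hab : le1 a b) (hlt : a < b) {z : Ordinal.{u}}
    (hz : z < a) : ∃ z', z' < a ∧ z < z' := by
  obtain ⟨x', hx', H⟩ := S1 h hab (κ₁ := Unit) (κ₂ := Unit)
    (QD.neg (QD.le (.inr ()) (.inl ()))) (fun _ => z) (fun _ => hz) (fun _ => a) (fun _ => hlt)
    (by simpa using hz)
  exact ⟨x' (), hx' (), by simpa using H⟩

theorem le1_lim {s a : Ordinal.{u}} (hs : s < a) (hl : ∀ z < a, ∃ z', z' < a ∧ z < z')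
    (H : ∀ z < a, s ≤ z → le1 s z) : le1 s a := by
  refine le1_intro h hs.le fun κ₁ κ₂ _ _ P hP v hv x hx hp => ?_
  have : ∃ z < a, s ≤ z ∧ ∀ i, x i < z := by
    classical
    cases nonempty_fintype κ₂
    have : ∀ t : Finset κ₂, ∃ z < a, s ≤ z ∧ ∀ i ∈ t, x i < z := by
      intro t
      induction t using Finset.induction_on with
      | empty => exact ⟨s, hs, le_rfl, by simp⟩
      | insert j t _ ih =>
        obtain ⟨z, hz, hsz, hzt⟩ := ih
        obtain ⟨y, hy, hxy⟩ := hl _ (hx j)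
        refine ⟨max z y, max_lt hz hy, hsz.trans (le_max_left _ _), ?_⟩
        intro i hi
        rcases Finset.mem_insert.1 hi with rfl | hi
        · exact hxy.trans_le (le_max_right _ _)
        · exact (hzt i hi).trans_le (le_max_left _ _)
    obtain ⟨z, h1, h2, h3⟩ := this Finset.univ
    exact ⟨z, h1, h2, fun i => h3 i (Finset.mem_univ _)⟩
  obtain ⟨z, hz, hsz, hxz⟩ := this
  exact S1 h (H z hz hsz) hP v hv x hxz hp

end

section
variable {le1 le2 : Ordinal.{u} → Ordinal.{u} → Prop} {F : RForest}

/-- `g` is a covering on the part `D`. -/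
def Diag (le1 le2 : Ordinal.{u} → Ordinal.{u} → Prop) (F : RForest) (D : F.P → Prop)
    (g : F.P → Ordinal.{u}) : Prop :=
  ∀ r s, D r → D s → ((F.le0 r s ↔ g r ≤ g s) ∧ (F.le1 r s → le1 (g r) (g s)) ∧
    (F.le2 r s → le2 (g r) (g s)))

theorem qd_diag {κ : Type} (D : F.P → Prop) (σ : F.P → κ) :
    QD le1 le2 (fun f => Diag le1 le2 F D (fun r => f (σ r))) := by
  refine QD.all fun r => QD.all fun s => QD.imp (QD.const _) (QD.imp (QD.const _) ?_)
  exact ((QD.const _).iff (QD.le _ _)).and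
    (((QD.const _).imp (QD.r1 _ _)).and ((QD.const _).imp (QD.r2 _ _)))

/-- There is a strictly smaller covering. -/
def Better (le1 le2 : Ordinal.{u} → Ordinal.{u} → Prop) (F : RForest)
    (c : F.P → Ordinal.{u}) : Prop :=
  ∃ c', IsCovering le1 le2 F c' ∧ (∀ r, c' r ≤ c r) ∧ ∃ p, c' p < c p

theorem diag_self {c : F.P → Ordinal.{u}} (hc : IsCovering le1 le2 F c) (D : F.P → Prop) :
    Diag le1 le2 F D c := fun r s _ _ => ⟨hc.1 r s, hc.2.1 r s, hc.2.2 r s⟩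

theorem diag_congr {D : F.P → Prop} {g g' : F.P → Ordinal.{u}} (h : ∀ r, D r → g r = g' r)
    (H : Diag le1 le2 F D g) : Diag le1 le2 F D g' := by
  intro r s hr hs
  rw [← h r hr, ← h s hs]
  exact H r s hr hs

open Classical in
theorem glue {c : F.P → Ordinal.{u}} (hc : IsCovering le1 le2 F c) (γ : Ordinal.{u})
    (g : F.P → Ordinal.{u}) (hg : Diag le1 le2 F (fun r => c r < γ) g)
    (hle : ∀ r, c r < γ → g r ≤ c r)
    (hx : ∀ r s, c r < γ → γ ≤ c s → (F.le1 r s → le1 (g r) (c s)) ∧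
      (F.le2 r s → le2 (g r) (c s))) (hlt : ∃ p, c p < γ ∧ g p < c p) :
    Better le1 le2 F c := by
  have hno : ∀ r s, c r < γ → γ ≤ c s → ¬ F.le0 s r := by
    intro r s hr hs h
    exact absurd ((hc.1 s r).1 h) (not_le.2 (hr.trans_le hs))
  have key : ∀ r s, (F.le0 r s ↔ (if c r < γ then g r else c r) ≤ (if c s < γ then g s else c s)) ∧
      (F.le1 r s → le1 (if c r < γ then g r else c r) (if c s < γ then g s else c s)) ∧
      (F.le2 r s → le2 (if c r < γ then g r else c r) (if c s < γ then g s else c s)) := by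
    intro r s
    by_cases hr : c r < γ <;> by_cases hs : c s < γ
    · simp only [hr, hs, if_true]; exact hg r s hr hs
    · simp only [hr, hs, if_true, if_false]
      refine ⟨⟨fun _ => (hle r hr).trans (hr.le.trans (not_lt.1 hs)), fun _ => ?_⟩,
        hx r s hr (not_lt.1 hs)⟩
      exact (hc.1 r s).2 (hr.le.trans (not_lt.1 hs))
    · simp only [hr, hs, if_true, if_false]
      have h1 := hno s r hs (not_lt.1 hr)
      refine ⟨⟨fun h => absurd h h1, fun h => ?_⟩, fun h => absurd (F.le1_sub_le0 _ _ h) h1,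
        fun h => absurd (F.le1_sub_le0 _ _ (F.le2_sub_le1 _ _ h)) h1⟩
      exact absurd (h.trans (hle s hs)) (not_le.2 (hs.trans_le (not_lt.1 hr)))
    · simp only [hr, hs, if_false]
      exact ⟨hc.1 r s, hc.2.1 r s, hc.2.2 r s⟩
  refine ⟨fun r => if c r < γ then g r else c r, ⟨fun r s => (key r s).1, fun r s => (key r s).2.1,
    fun r s => (key r s).2.2⟩, fun r => ?_, ?_⟩
  · dsimp only
    split_ifs with hr
    · exact hle r hr
    · exact le_rfl
  · obtain ⟨p, hp, h2⟩ := hlt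
    exact ⟨p, by simpa only [hp, if_true] using h2⟩

open Classical in
/-- variables -/
noncomputable def sg {κ : Type} (c : F.P → Ordinal.{u}) (a : Ordinal.{u}) (j : F.P → κ) (r : F.P) :
    {r : F.P // c r < a} ⊕ κ :=
  if h : c r < a then .inl ⟨r, h⟩ else .inr (j r)

theorem sg_lt {κ : Type} {c v : F.P → Ordinal.{u}} {a : Ordinal.{u}} {j : F.P → κ}
    {x : κ → Ordinal.{u}} {r : F.P} (h : c r < a) :
    Sum.elim (fun i : {r : F.P // c r < a} => v i.1) x (sg c a j r) = v r := by
  simp [sg, h]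

theorem sg_ge {κ : Type} {c v : F.P → Ordinal.{u}} {a : Ordinal.{u}} {j : F.P → κ}
    {x : κ → Ordinal.{u}} {r : F.P} (h : ¬ c r < a) :
    Sum.elim (fun i : {r : F.P // c r < a} => v i.1) x (sg c a j r) = x (j r) := by
  simp [sg, h]

variable (h : IsR2Pair le1 le2)
include h

open Classical in
theorem moveB {c : F.P → Ordinal.{u}} (hc : IsCovering le1 le2 F c) {p : F.P} {γ : Ordinal.{u}}
    (hlt : c p < γ) (h1 : le1 (c p) γ)
    (H : ∀ r s, c p ≤ c r → c r < γ → γ ≤ c s → ¬ F.le1 r s) : Better le1 le2 F c := by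
  obtain ⟨x, hx, hd⟩ := S1 h h1 (qd_diag (le1 := le1) (le2 := le2) (F := F)
    (fun r => c r < γ) (sg c (c p) id))
    (fun i => c i.1) (fun i => i.2) (fun r => if c r < γ then c r else c p)
    (fun r => by split_ifs with hr; exacts [hr, hlt])
    (diag_congr (g := c) (fun r hr => by
      by_cases h' : c r < c p
      · rw [sg_lt (v := c) h']
      · rw [sg_ge (v := c) h']
        simp [hr]) (diag_self hc _))
  refine glue hc γ _ hd ?_ ?_ ⟨p, hlt, ?_⟩
  · intro r hr
    by_cases h' : c r < c p
    · rw [sg_lt (v := c) h']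
    · rw [sg_ge (v := c) h']
      exact (hx _).le.trans (not_lt.1 h')
  · intro r s hr hs
    by_cases h' : c r < c p
    · rw [sg_lt (v := c) h']
      exact ⟨hc.2.1 r s, hc.2.2 r s⟩
    · have := H r s (not_lt.1 h') hr hs
      exact ⟨fun h => absurd h this, fun h => absurd (F.le2_sub_le1 _ _ h) this⟩
  · rw [sg_ge (v := c) (lt_irrefl _)]
    exact hx _

open Classical in
theorem moveA {c : F.P → Ordinal.{u}} (hc : IsCovering le1 le2 F c) {p : F.P} {γ : Ordinal.{u}}
    (hlt : c p < γ) (h2 : le2 (c p) γ)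
    (H : ∀ r s, c p ≤ c r → c r < γ → γ ≤ c s → F.le1 r s → le1 (c p) (c s) ∧ ¬ F.le2 r s) :
    Better le1 le2 F c := by
  have h1 := le1_of_2 h h2
  have hQ : QD le1 le2 (fun f : {r : F.P // c r < c p} ⊕ (F.P ⊕ Unit) → Ordinal.{u} =>
      Diag le1 le2 F (fun r => c r < γ) (fun r => f (sg c (c p) Sum.inl r)) ∧
      ∀ t : F.P, (c p ≤ c t ∧ c t < γ ∧ le1 (c t) γ) →
        (f (sg c (c p) Sum.inl t) ≤ f (.inr (.inr ())) →
          le1 (f (sg c (c p) Sum.inl t)) (f (.inr (.inr ()))))) := by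
    refine (qd_diag _ _).and (QD.all fun t => (QD.const _).imp ((QD.le _ _).imp (QD.r1 _ _)))
  obtain ⟨x, hx, hd⟩ := S2 h h2 hQ
    (fun i => c i.1) (fun i => i.2) (fun r => if c r < γ then c r else c p)
    (fun r => by split_ifs with hr; exacts [hr, hlt]) (by
      intro z hz
      refine ⟨diag_congr (g := c) (fun r hr => ?_) (diag_self hc _), fun t ht => ?_⟩
      · by_cases h' : c r < c p
        · rw [sg_lt (v := c) h']
        · rw [sg_ge (v := c) h']
          simp [hr]
      · rw [sg_ge (v := c) (not_lt.2 ht.1)]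
        simp only [Sum.elim_inl, Sum.elim_inr, ht.2.1, if_true]
        intro hle
        exact respects1 h hle (hz _).le ht.2.2)
  have hd0 := (hd (fun _ => x p) (fun _ => hx p)).1
  have hT : ∀ t, c p ≤ c t → c t < γ → le1 (c t) γ → le1 (x t) (c p) := by
    intro t ht1 ht2 ht3
    refine le1_lim h (hx t) (fun z hz => lim_of_lt1 h h1 hlt hz) fun z hz hxz => ?_
    have := (hd (fun _ => z) (fun _ => hz)).2 t ⟨ht1, ht2, ht3⟩
    rw [sg_ge (v := c) (not_lt.2 ht1)] at this
    exact this hxz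
  refine glue hc γ _ hd0 ?_ ?_ ⟨p, hlt, ?_⟩
  · intro r hr
    by_cases h' : c r < c p
    · rw [sg_lt (v := c) h']
    · rw [sg_ge (v := c) h']
      exact (hx _).le.trans (not_lt.1 h')
  · intro r s hr hs
    by_cases h' : c r < c p
    · rw [sg_lt (v := c) h']
      exact ⟨hc.2.1 r s, hc.2.2 r s⟩
    · rw [sg_ge (v := c) h']
      refine ⟨fun hrs => ?_, fun hrs => ?_⟩
      · exact trans1 h (hT r (not_lt.1 h') hr (respects1 h hr.le hs (hc.2.1 _ _ hrs)))
          (H r s (not_lt.1 h') hr hs hrs).1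
      · exact absurd hrs (H r s (not_lt.1 h') hr hs (F.le2_sub_le1 _ _ hrs)).2
  · rw [sg_ge (v := c) (lt_irrefl _)]
    exact hx _

open Classical in
theorem moveC {c : F.P → Ordinal.{u}} (hc : IsCovering le1 le2 F c) {p q : F.P} {δ : Ordinal.{u}}
    (hlt : c p < c q) (h2 : le2 (c p) (c q)) (hqδ : c q < δ) (hδ : le1 (c p) δ)
    (H : ∀ r s, c p ≤ c r → c r < c q → c q ≤ c s → c s < δ → ¬ F.le2 r s)
    (H' : ∀ r s, c q ≤ c r → c r < δ → δ ≤ c s → ¬ F.le1 r s) :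
    Better le1 le2 F c := by
  have h1 := le1_of_2 h h2
  -- it suffices to find the copy below `c q`
  suffices hs : ∃ x : F.P → Ordinal.{u}, (∀ r, x r < c q) ∧
      Diag le1 le2 F (fun r => c r < δ) (fun r => if c r < c q then c r else x r) by
    obtain ⟨x, hx, hd⟩ := hs
    refine glue hc δ _ hd ?_ ?_ ⟨q, hqδ, ?_⟩
    · intro r hr
      split_ifs with h'
      · exact le_rfl
      · exact (hx _).le.trans (not_lt.1 h')
    · intro r s hr hs
      by_cases h' : c r < c q
      · simp only [h', if_true]
        exact ⟨hc.2.1 r s, hc.2.2 r s⟩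
      · have := H' r s (not_lt.1 h') hr hs
        exact ⟨fun h => absurd h this, fun h => absurd (F.le2_sub_le1 _ _ h) this⟩
    · simp only [lt_irrefl, if_false]
      exact hx _
  by_contra hno
  push Not at hno
  let τ : F.P → {r : F.P // c r < c p} ⊕ (F.P ⊕ (Unit ⊕ F.P)) := fun r =>
    if c r < c q then sg c (c p) Sum.inl r else .inr (.inr (.inr r))
  have hQ : QD le1 le2 (fun f : {r : F.P // c r < c p} ⊕ (F.P ⊕ (Unit ⊕ F.P)) → Ordinal.{u} =>
      (Diag le1 le2 F (fun r => c r < c q) (fun r => f (sg c (c p) Sum.inl r)) ∧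
      ∀ t : F.P, (c p ≤ c t ∧ c t < c q ∧ le1 (c t) (c q)) →
        (f (sg c (c p) Sum.inl t) ≤ f (.inr (.inr (.inl ()))) →
          le1 (f (sg c (c p) Sum.inl t)) (f (.inr (.inr (.inl ())))))) ∧
      ¬ Diag le1 le2 F (fun r => c r < δ) (fun r => f (τ r))) := by
    refine QD.and ?_ (QD.neg (qd_diag _ _))
    refine (qd_diag _ _).and (QD.all fun t => (QD.const _).imp ((QD.le _ _).imp (QD.r1 _ _)))
  obtain ⟨x, hx, hd⟩ := S2 h h2 hQ
    (fun i => c i.1) (fun i => i.2) (fun r => if c r < c q then c r else c p)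
    (fun r => by split_ifs with hr; exacts [hr, hlt]) (by
      intro z hz
      refine ⟨⟨diag_congr (g := c) (fun r hr => ?_) (diag_self hc _), fun t ht => ?_⟩, fun hD => ?_⟩
      · by_cases h' : c r < c p
        · rw [sg_lt (v := c) h']
        · rw [sg_ge (v := c) h']
          simp [hr]
      · rw [sg_ge (v := c) (not_lt.2 ht.1)]
        simp only [Sum.elim_inl, Sum.elim_inr, ht.2.1, if_true]
        intro hle
        exact respects1 h hle (hz _).le ht.2.2
      · refine hno (fun r => z (.inr r)) (fun r => hz _) (diag_congr (fun r hr => ?_) hD)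
        by_cases hq : c r < c q
        · simp only [τ, hq, if_true]
          by_cases h' : c r < c p
          · rw [sg_lt (v := c) h']
          · rw [sg_ge (v := c) h']
            simp [hq]
        · simp [τ, hq])
  have hd0 := (hd (fun _ => x p) (fun _ => hx p)).1.1
  have hT : ∀ t, c p ≤ c t → c t < c q → le1 (c t) (c q) → le1 (x t) (c p) := by
    intro t ht1 ht2 ht3
    refine le1_lim h (hx t) (fun z hz => lim_of_lt1 h h1 hlt hz) fun z hz hxz => ?_
    have := (hd (fun _ => z) (fun _ => hz)).1.2 t ⟨ht1, ht2, ht3⟩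
    rw [sg_ge (v := c) (not_lt.2 ht1)] at this
    exact this hxz
  -- the function `A, x`
  let w : F.P → Ordinal.{u} := fun r => if c r < c p then c r else x r
  have hw : ∀ r, w r < c p := by
    intro r
    simp only [w]
    split_ifs with hr
    exacts [hr, hx r]
  have hdw : Diag le1 le2 F (fun r => c r < c q) w := by
    refine diag_congr (fun r hr => ?_) hd0
    by_cases h' : c r < c p
    · rw [sg_lt (v := c) h']; simp [w, h']
    · rw [sg_ge (v := c) h']; simp [w, h']
  -- `A, x, C` is a covering below `δ`
  have hfull : Diag le1 le2 F (fun r => c r < δ) (fun r => if c r < c q then w r else c r) := by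
    intro r s hr hs
    by_cases hrq : c r < c q <;> by_cases hsq : c s < c q
    · simp only [hrq, hsq, if_true]; exact hdw r s hrq hsq
    · simp only [hrq, hsq, if_true, if_false]
      rw [not_lt] at hsq
      refine ⟨⟨fun _ => ((hw r).trans hlt).le.trans hsq, fun _ => ?_⟩, fun hrs => ?_, fun hrs => ?_⟩
      · exact (hc.1 r s).2 (hrq.le.trans hsq)
      · by_cases h' : c r < c p
        · simp only [w, h', if_true]; exact hc.2.1 _ _ hrs
        · simp only [w, h', if_false]
          refine trans1 h (hT r (not_lt.1 h') hrq (respects1 h hrq.le hsq (hc.2.1 _ _ hrs))) ?_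
          exact respects1 h (hlt.le.trans hsq) hs.le hδ
      · by_cases h' : c r < c p
        · simp only [w, h', if_true]; exact hc.2.2 _ _ hrs
        · exact absurd hrs (H r s (not_lt.1 h') hrq hsq hs)
    · simp only [hrq, hsq, if_true, if_false]
      rw [not_lt] at hrq
      have h1 : ¬ F.le0 r s := fun h => absurd ((hc.1 r s).1 h) (not_le.2 (hsq.trans_le hrq))
      refine ⟨⟨fun h => absurd h h1, fun h => ?_⟩, fun h => absurd (F.le1_sub_le0 _ _ h) h1,
        fun h => absurd (F.le1_sub_le0 _ _ (F.le2_sub_le1 _ _ h)) h1⟩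
      exact absurd h (not_le.2 (((hw s).trans hlt).trans_le hrq))
    · simp only [hrq, hsq, if_false]
      exact ⟨hc.1 r s, hc.2.1 r s, hc.2.2 r s⟩
  obtain ⟨y, hy, hyd⟩ := S1 h hδ (qd_diag (le1 := le1) (le2 := le2) (F := F)
    (fun r => c r < δ) (sg c (c q) id))
    (fun i => w i.1) (fun i => hw _) (fun r => if c r < δ then c r else c p)
    (fun r => by split_ifs with hr; exacts [hr, hlt.trans hqδ])
    (diag_congr (fun r hr => by
      by_cases h' : c r < c q
      · rw [sg_lt (v := w) h']; simp [h']
      · rw [sg_ge (v := w) h']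
        simp [hr, h']) hfull)
  refine (hd (Sum.elim (fun _ => x p) y) ?_).2 (diag_congr (fun r hr => ?_) hyd)
  · rintro (i | i)
    exacts [hx p, hy i]
  · by_cases hq : c r < c q
    · rw [sg_lt (v := w) hq]
      simp only [τ, hq, if_true]
      by_cases h' : c r < c p
      · rw [sg_lt (v := c) h']; simp [w, h']
      · rw [sg_ge (v := c) h']; simp [w, h']
    · rw [sg_ge (v := w) hq]
      simp [τ, hq]

/-- A covering that cannot be improved is an embedding. -/
theorem minimal_embedding1 {c : F.P → Ordinal.{u}} (hc : IsCovering le1 le2 F c)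
    (hm : ¬ Better le1 le2 F c) (p q : F.P) (hpq : le1 (c p) (c q)) : F.le1 p q := by
  by_contra hn
  let S : Set F.P := {s | c p ≤ c s ∧ le1 (c p) (c s) ∧ ¬ F.le1 p s}
  obtain ⟨q, ⟨h0, hpq, hn⟩, hmin⟩ := Set.exists_min_image S c (Set.toFinite _)
    ⟨q, le_of_1 h hpq, hpq, hn⟩
  have hlt : c p < c q := by
    refine lt_of_le_of_ne h0 fun he => hn ?_
    have : p = q := F.le0_antisymm _ _ ((hc.1 _ _).2 he.le) ((hc.1 _ _).2 he.ge)
    exact this ▸ F.le1_refl p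
  refine hm (moveB h hc hlt hpq fun r s hr hrq hqs hrs => hn ?_)
  have hpr : F.le1 p r := by
    by_contra hpr
    exact absurd (hmin r ⟨hr, respects1 h hr hrq.le hpq, hpr⟩) (not_le.2 hrq)
  exact F.respects1 _ _ _ ((hc.1 _ _).2 h0) ((hc.1 _ _).2 hqs) (F.le1_trans _ _ _ hpr hrs)

theorem minimal_embedding2 {c : F.P → Ordinal.{u}} (hc : IsCovering le1 le2 F c)
    (hm : ¬ Better le1 le2 F c) (p q : F.P) (hpq : le2 (c p) (c q)) : F.le2 p q := by
  by_contra hn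
  let S : Set F.P := {s | le2 (c p) (c s) ∧ ¬ F.le2 p s}
  obtain ⟨q, ⟨hpq, hn⟩, hmin⟩ := Set.exists_min_image S c (Set.toFinite _) ⟨q, hpq, hn⟩
  have h1 := le1_of_2 h hpq
  have h0 := le_of_1 h h1
  have hlt : c p < c q := by
    refine lt_of_le_of_ne h0 fun he => hn ?_
    have : p = q := F.le0_antisymm _ _ ((hc.1 _ _).2 he.le) ((hc.1 _ _).2 he.ge)
    exact this ▸ F.le2_refl p
  have hF1 : F.le1 p q := minimal_embedding1 h hc hm p q h1
  have hT : ∀ r, c p ≤ c r → c r < c q → le1 (c r) (c q) → F.le2 p r := by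
    intro r hr hrq hr1
    by_contra hpr
    exact absurd (hmin r ⟨respects2 h (respects1 h hr hrq.le h1) hr1 hpq, hpr⟩) (not_le.2 hrq)
  obtain ⟨m, hqm, hmax⟩ := Set.exists_max_image {s | F.le1 q s} c (Set.toFinite _)
    ⟨q, F.le1_refl q⟩
  change F.le1 q m at hqm
  have hqm0 : c q ≤ c m := (hc.1 _ _).1 (F.le1_sub_le0 _ _ hqm)
  have hkey : ∀ r s, c p ≤ c r → c r < c q → c q ≤ c s → c s ≤ c m → ¬ F.le2 r s := by
    intro r s hr hrq hqs hsm hrs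
    apply hn
    have hrs1 := hc.2.1 _ _ (F.le2_sub_le1 _ _ hrs)
    have h3 := hT r hr hrq (respects1 h hrq.le hqs hrs1)
    have h4 := F.le2_trans _ _ _ h3 hrs
    have h5 : F.le1 q s := F.respects1 _ _ _ ((hc.1 _ _).2 hqs) ((hc.1 _ _).2 hsm) hqm
    exact F.respects2 _ _ _ hF1 h5 h4
  by_cases hcase : ∃ s, c m < c s ∧ F.le1 p s
  · obtain ⟨s, hms, hps⟩ := hcase
    refine hm (moveC h hc hlt hpq (δ := Order.succ (c m)) (Order.lt_succ_of_le hqm0) ?_ ?_ ?_)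
    · exact respects1 h (h0.trans (hqm0.trans (Order.le_succ _))) (Order.succ_le_of_lt hms)
        (hc.2.1 _ _ hps)
    · intro r s hr hrq hqs hsd
      exact hkey r s hr hrq hqs (Order.lt_succ_iff.1 hsd)
    · intro r s hqr hrd hds hrs
      have h5 : F.le1 q r := F.respects1 _ _ _ ((hc.1 _ _).2 hqr)
        ((hc.1 _ _).2 (Order.lt_succ_iff.1 hrd)) hqm
      exact absurd (hmax s (F.le1_trans _ _ _ h5 hrs)) (not_le.2 (Order.succ_le_iff.1 hds))
  · push Not at hcase
    refine hm (moveA h hc hlt hpq fun r s hr hrq hqs hrs => ?_)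
    have h5 : F.le1 p r := F.respects1 _ _ _ ((hc.1 _ _).2 hr) ((hc.1 _ _).2 hrq.le) hF1
    have h6 := F.le1_trans _ _ _ h5 hrs
    refine ⟨hc.2.1 _ _ h6, hkey r s hr hrq hqs ?_⟩
    by_contra hlt'
    exact hcase s (not_le.1 hlt') h6

omit h in
theorem exists_minimal {c : F.P → Ordinal.{u}} (hc : IsCovering le1 le2 F c) :
    ∃ c₀, IsCovering le1 le2 F c₀ ∧ ¬ Better le1 le2 F c₀ ∧ ∀ r, c₀ r ≤ c r := by
  obtain ⟨c₀, ⟨h1, h2⟩, hmin⟩ := (wellFounded_lt (α := F.P → Ordinal.{u})).has_min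
    {d | IsCovering le1 le2 F d ∧ ∀ r, d r ≤ c r} ⟨c, hc, fun _ => le_rfl⟩
  refine ⟨c₀, h1, ?_, h2⟩
  rintro ⟨d, hd, hle, p, hp⟩
  refine hmin d ⟨hd, fun r => (hle r).trans (h2 r)⟩ ?_
  exact Pi.lt_def.2 ⟨hle, p, hp⟩

omit h in
/-- Pointwise comparison transfers through enumerations by a forest. -/
theorem pw_transfer {X Y : Finset Ordinal.{u}} (hXY : pwLE X Y) {F : RForest}
    (e : F.P ≃ {x // x ∈ X}) (he : ∀ p q, F.le0 p q ↔ (e p : Ordinal.{u}) ≤ e q)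
    (d : F.P ≃ {x // x ∈ Y}) (hd : ∀ p q, F.le0 p q ↔ (d p : Ordinal.{u}) ≤ d q) (p : F.P) :
    (e p : Ordinal.{u}) ≤ d p := by
  obtain ⟨hcard, H⟩ := hXY
  let o := X.orderIsoOfFin rfl
  have key : ∀ i, Y.orderIsoOfFin hcard.symm i = d (e.symm (o i)) := by
    intro i
    have := Finset.orderEmbOfFin_unique hcard.symm
      (f := fun i => (d (e.symm (o i)) : Ordinal.{u})) (fun i => (d _).2) (by
        intro i j hij
        have h1 : o i < o j := o.strictMono hij
        refine lt_of_not_ge fun hle => ?_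
        have h2 := (he _ _).1 ((hd _ _).2 hle)
        simp only [Equiv.apply_symm_apply] at h2
        exact absurd h1 (not_lt.2 h2))
    have h2 := congrFun this i
    apply Subtype.ext
    rw [h2]
    simp
  have := H (o.symm (e p))
  rw [key] at this
  simpa [o] using this

theorem isominimal_not_better {X : Finset Ordinal.{u}} (hX : ∀ Y : Finset Ordinal.{u},
      Realizes le1 le2 F Y → pwLE X Y) (e : F.P ≃ {x // x ∈ X})
    (he : ∀ p q, F.le0 p q ↔ (e p : Ordinal.{u}) ≤ e q) :
    ¬ Better le1 le2 F (fun p => (e p : Ordinal.{u})) := by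
  classical
  rintro ⟨c, hc, hle, p, hp⟩
  obtain ⟨c₀, h0, hb, h0c⟩ := exists_minimal hc
  have hinj : Function.Injective c₀ := fun r s hrs =>
    F.le0_antisymm _ _ ((h0.1 _ _).2 hrs.le) ((h0.1 _ _).2 hrs.ge)
  let Y : Finset Ordinal.{u} := Finset.univ.image c₀
  let d : F.P ≃ {x // x ∈ Y} := Equiv.ofBijective
    (fun r => ⟨c₀ r, Finset.mem_image_of_mem _ (Finset.mem_univ _)⟩) ⟨by
      intro r s hrs
      exact hinj (congrArg Subtype.val hrs), by
      rintro ⟨x, hx⟩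
      obtain ⟨r, _, rfl⟩ := Finset.mem_image.1 hx
      exact ⟨r, rfl⟩⟩
  have hd : ∀ r, (d r : Ordinal.{u}) = c₀ r := fun r => rfl
  have hY : Realizes le1 le2 F Y := by
    refine ⟨d, fun r s => ?_⟩
    rw [hd, hd]
    exact ⟨h0.1 r s, ⟨h0.2.1 r s, minimal_embedding1 h h0 hb r s⟩,
      ⟨h0.2.2 r s, minimal_embedding2 h h0 hb r s⟩⟩
  have := pw_transfer (hX Y hY) e he d (fun r s => by rw [hd, hd]; exact h0.1 r s) p
  rw [hd] at this
  exact absurd (this.trans (h0c p)) (not_le.2 hp)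

theorem main {X : Finset Ordinal.{u}} (hX : IsIsominimalRealization le1 le2 F X) :
    ∀ β ∈ X,
      (∃ m, (le1 β m ∧ ∀ γ, le1 β γ → γ ≤ m) ∧ m ∈ X) ∧
      (∃ m, (le2 β m ∧ ∀ γ, le2 β γ → γ ≤ m) ∧ m ∈ X) := by
  obtain ⟨⟨e, he⟩, hmin⟩ := hX
  have hnb := isominimal_not_better h hmin e (fun p q => (he p q).1)
  let c : F.P → Ordinal.{u} := fun p => (e p : Ordinal.{u})
  have hc : IsCovering le1 le2 F c := ⟨fun p q => (he p q).1, fun p q => (he p q).2.1.1,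
    fun p q => (he p q).2.2.1⟩
  change ¬ Better le1 le2 F c at hnb
  intro β hβ
  obtain ⟨p, hp⟩ : ∃ p, c p = β := ⟨e.symm ⟨β, hβ⟩, by simp [c]⟩
  subst hp
  have hmem : ∀ q, c q ∈ X := fun q => (e q).2
  -- first part
  obtain ⟨M, hpM, hMmax⟩ := Set.exists_max_image {s | F.le1 p s} c (Set.toFinite _)
    ⟨p, F.le1_refl p⟩
  change F.le1 p M at hpM
  have hpM0 : c p ≤ c M := (hc.1 _ _).1 (F.le1_sub_le0 _ _ hpM)
  have hlh : ∀ γ, le1 (c p) γ → γ ≤ c M := by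
    intro γ hγ
    by_contra hlt
    rw [not_le] at hlt
    refine hnb (moveB h hc (p := p) (γ := Order.succ (c M)) (Order.lt_succ_of_le hpM0)
      (respects1 h (hpM0.trans (Order.le_succ _)) (Order.succ_le_of_lt hlt) hγ) ?_)
    intro r s hpr hrM hMs hrs
    have h5 : F.le1 p r := F.respects1 _ _ _ ((hc.1 _ _).2 hpr)
      ((hc.1 _ _).2 (Order.lt_succ_iff.1 hrM)) hpM
    exact absurd (hMmax s (F.le1_trans _ _ _ h5 hrs)) (not_le.2 (Order.succ_le_iff.1 hMs))
  refine ⟨⟨c M, ⟨hc.2.1 _ _ hpM, hlh⟩, hmem M⟩, ?_⟩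
  -- second part
  obtain ⟨m, hpm, hmmax⟩ := Set.exists_max_image {s | F.le2 p s} c (Set.toFinite _)
    ⟨p, F.le2_refl p⟩
  change F.le2 p m at hpm
  have hpm0 : c p ≤ c m := (hc.1 _ _).1 (F.le1_sub_le0 _ _ (F.le2_sub_le1 _ _ hpm))
  refine ⟨c m, ⟨hc.2.2 _ _ hpm, fun γ hγ => ?_⟩, hmem m⟩
  by_contra hlt
  rw [not_le] at hlt
  have hγ1 := le1_of_2 h hγ
  refine hnb (moveA h hc (p := p) (γ := γ) (hpm0.trans_lt hlt) hγ fun r s hpr hrγ hγs hrs => ?_)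
  have hpr1 : le1 (c p) (c r) := respects1 h hpr hrγ.le hγ1
  refine ⟨trans1 h hpr1 (hc.2.1 _ _ hrs), fun hrs2 => ?_⟩
  have hpr2 : le2 (c p) (c r) :=
    respects2 h hpr1 (respects1 h hrγ.le hγs (hc.2.1 _ _ hrs)) hγ
  have := hmmax s (F.le2_trans _ _ _ ((he p r).2.2.2 hpr2) hrs2)
  exact absurd (hlt.trans_le hγs) (not_lt.2 this)

end

end R2

theorem stmt11 (le1 le2 : Ordinal → Ordinal → Prop) (h : IsR2Pair le1 le2)
    (F : RForest) (X : Finset Ordinal) (hX : IsIsominimalRealization le1 le2 F X) :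
    ∀ β ∈ X,
      (∃ m, (le1 β m ∧ ∀ γ, le1 β γ → γ ≤ m) ∧ m ∈ X) ∧
      (∃ m, (le2 β m ∧ ∀ γ, le2 β γ → γ ≤ m) ∧ m ∈ X) := by
  exact R2.main h hX
end

section
/- For every ordinal α < 1^∞, the set Pred₂(α) = {β : β <₂ α} of strict ≤₂-predecessors of α is finite and linearly ordered by <₂, i.e., it forms a finite <₂-chain β₁ <₂ β₂ <₂ ⋯ <₂ β_r <₂ α. -/
open FirstOrder

theorem stmt12 (le1 le2 : Ordinal → Ordinal → Prop) (h : IsR2Pair le1 le2)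
    (α : Ordinal) (hα : α < OneInfty le2) :
    {β : Ordinal | Lt2 le2 β α}.Finite ∧
    ∀ β ∈ {β : Ordinal | Lt2 le2 β α}, ∀ γ ∈ {β : Ordinal | Lt2 le2 β α},
      β ≠ γ → Lt2 le2 β γ ∨ Lt2 le2 γ β := by
  have key : ∀ β γ : Ordinal, Lt2 le2 β α → Lt2 le2 γ α → β < γ → Lt2 le2 β γ := by
    intro β γ hβ hγ hlt
    refine ⟨?_, hlt.ne⟩
    obtain ⟨h1, h2⟩ := (h.2 β α).1 hβ.1
    obtain ⟨h3, h4⟩ := (h.2 γ α).1 hγ.1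
    refine (h.2 β γ).2 ⟨hlt.le, fun k φ hφ v => ?_⟩
    exact (h2 k φ hφ v).trans
      (h4 k φ hφ (fun j => ⟨(v j).1, lt_of_lt_of_le (v j).2 hlt.le⟩)).symm
  constructor
  · by_contra hinf
    refine absurd hα (not_lt.2 (csInf_le' ?_))
    intro n
    obtain ⟨t, ht, hc⟩ := Set.Infinite.exists_subset_card_eq hinf n
    have hm : ∀ i, Lt2 le2 (t.orderEmbOfFin hc i) α := fun i =>
      ht (t.orderEmbOfFin_mem hc i)
    refine ⟨t.orderEmbOfFin hc, fun i => ?_, fun i hi => ?_⟩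
    · obtain ⟨h1, _⟩ := (h.2 _ α).1 (hm i).1
      exact lt_of_le_of_ne h1 (hm i).2
    · refine key _ _ (hm _) (hm _) ((t.orderEmbOfFin hc).strictMono ?_)
      exact Nat.lt_succ_self i
  · intro β hβ γ hγ hne
    rcases lt_or_gt_of_ne hne with hl | hl
    · exact Or.inl (key β γ hβ hγ hl)
    · exact Or.inr (key γ β hγ hβ hl)
end

section
/- For every natural number n there exist ordinals β₁ <₂ β₂ <₂ ⋯ <₂ βₙ; that is, the structure ℛ₂ contains <₂-chains of every finite length. -/
open FirstOrder

open Ordinal in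
theorem aux_countable_seg (δ : Ordinal) (hδ : δ < ω₁) : Countable {x : Ordinal // x < δ} := by
  have h1 : Cardinal.mk (Set.Iio δ) ≤ Cardinal.aleph0 := by
    rw [Cardinal.mk_Iio_ordinal, Cardinal.lift_le_aleph0]
    have : δ < (Cardinal.aleph 1).ord := by simpa using hδ
    rw [Cardinal.lt_ord, ← Cardinal.succ_aleph0, Order.lt_succ_iff] at this
    exact this
  exact Cardinal.mk_le_aleph0_iff.1 h1

theorem aux_countable_lang : Countable ordLang.Symbols := by
  have h1 : ∀ n, Countable (ordLang.Functions n) := fun n =>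
    (inferInstance : Countable Empty)
  have h2 : ∀ n, Countable (ordLang.Relations n) := fun n => by
    have : Function.Injective (fun r : ordRel n => match n, r with
      | _, .le => (0 : ℕ) | _, .le1 => 1 | _, .le2 => 2) := by
      intro a b hab
      cases a <;> cases b <;> simp_all
    exact this.countable
  unfold FirstOrder.Language.Symbols
  infer_instance

open Ordinal in
theorem aux_step (le1 le2 : Ordinal → Ordinal → Prop) (δ : Ordinal) (hδ : δ < ω₁) :
    ∃ δ', δ < δ' ∧ δ' < ω₁ ∧
      ∀ (n : ℕ) (φ : ordLang.BoundedFormula Empty (n + 1)) (x : Fin n → {x : Ordinal // x < ω₁}),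
        (∀ i, (x i).1 < δ) →
        ∀ a : {x : Ordinal // x < ω₁},
          (letI := segStr le1 le2 ω₁; φ.Realize default (Fin.snoc x a : Fin (n + 1) → _)) →
          ∃ b : {x : Ordinal // x < ω₁}, b.1 < δ' ∧
            (letI := segStr le1 le2 ω₁; φ.Realize default (Fin.snoc x b : Fin (n + 1) → _)) := by
  classical
  letI := segStr le1 le2 ω₁
  haveI := aux_countable_lang
  haveI := aux_countable_seg δ hδ
  let emb : {x : Ordinal // x < δ} → {x : Ordinal // x < ω₁} := fun x => ⟨x.1, x.2.trans hδ⟩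
  haveI hc : ∀ n, Countable (ordLang.BoundedFormula Empty n) := fun n =>
    (sigma_mk_injective (β := fun n => ordLang.BoundedFormula Empty n) (i := n)).countable
  have h0 : (0 : Ordinal) < ω₁ := omega_pos 1
  let I := Σ n : ℕ, ordLang.BoundedFormula Empty (n + 1) × (Fin n → {x : Ordinal // x < δ})
  let w : I → {x : Ordinal // x < ω₁} := fun i =>
    if h : ∃ a : {x : Ordinal // x < ω₁},
      i.2.1.Realize default (Fin.snoc (emb ∘ i.2.2) a : Fin (i.1 + 1) → _) then h.choose
    else ⟨0, h0⟩
  have hlim : ∀ o : Ordinal, o < ω₁ → Order.succ o < ω₁ := fun o ho =>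
    (Cardinal.isSuccLimit_omega 1).succ_lt ho
  have hsup : (⨆ i : I, Order.succ (w i).1) < ω₁ :=
    Ordinal.iSup_lt_omega_one fun i => hlim _ (w i).2
  refine ⟨max (Order.succ δ) (⨆ i : I, Order.succ (w i).1),
    lt_max_of_lt_left (Order.lt_succ δ), max_lt (hlim _ hδ) hsup, ?_⟩
  intro n φ x hx a ha
  let i : I := ⟨n, φ, fun j => ⟨(x j).1, hx j⟩⟩
  have hex : ∃ a : {x : Ordinal // x < ω₁},
      i.2.1.Realize default (Fin.snoc (emb ∘ i.2.2) a : Fin (i.1 + 1) → _) := ⟨a, ha⟩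
  refine ⟨w i, ?_, ?_⟩
  · refine lt_max_of_lt_right (lt_of_lt_of_le (Order.lt_succ _) ?_)
    exact le_ciSup (f := fun i : I => Order.succ (w i).1)
      ⟨ω₁, by rintro _ ⟨i, rfl⟩; exact (hlim _ (w i).2).le⟩ i
  · have hw : w i = hex.choose := dif_pos hex
    rw [hw]
    exact hex.choose_spec

/-- Full elementarity of the segment below `a` in the segment below `b`. -/
abbrev FullElem (le1 le2 : Ordinal → Ordinal → Prop) (a b : Ordinal) : Prop :=
  ElemSub (fun _ _ => True) le1 le2 a b

open Ordinal in
theorem aux_club (le1 le2 : Ordinal → Ordinal → Prop) (γ : Ordinal) (hγ : γ < ω₁) :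
    ∃ α, γ < α ∧ α < ω₁ ∧ FullElem le1 le2 α ω₁ := by
  choose g hg1 hg2 hg3 using aux_step le1 le2
  let s : ℕ → {x : Ordinal // x < ω₁} := fun n =>
    Nat.rec ⟨γ, hγ⟩ (fun _ p => ⟨g p.1 p.2, hg2 p.1 p.2⟩) n
  have hs : ∀ n, (s n).1 < (s (n + 1)).1 := fun n => hg1 _ _
  have hmono : Monotone fun n => (s n).1 := monotone_nat_of_le_succ fun n => (hs n).le
  have hbdd : BddAbove (Set.range fun n => (s n).1) :=
    ⟨ω₁, by rintro _ ⟨i, rfl⟩; exact (s i).2.le⟩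
  have hlt : (⨆ n, (s n).1) < ω₁ := Ordinal.iSup_lt_omega_one fun n => (s n).2
  have hle : ∀ n, (s n).1 < ⨆ n, (s n).1 := fun n =>
    lt_of_lt_of_le (hs n) (le_ciSup hbdd (n + 1))
  refine ⟨⨆ n, (s n).1, hle 0, hlt, hlt.le, ?_⟩
  intro k φ _ v
  letI i1 := segStr le1 le2 ω₁
  letI i2 := segStr le1 le2 (⨆ n, (s n).1)
  let f : {x : Ordinal // x < ⨆ n, (s n).1} ↪[ordLang] {x : Ordinal // x < ω₁} :=
    { toFun := fun x => ⟨x.1, x.2.trans hlt⟩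
      inj' := fun x y hxy => Subtype.ext (congrArg (fun z => z.1) hxy)
      map_fun' := fun f => Empty.elim f
      map_rel' := fun r x => by cases r <;> exact Iff.rfl }
  refine (f.isElementary_of_exists ?_ φ v).symm
  intro n φ x a ha
  have hx : ∃ m, ∀ i, (x i).1 < (s m).1 := by
    have h1 : ∀ i, ∃ m, (x i).1 < (s m).1 := fun i => by
      by_contra! hcon
      exact absurd (x i).2 (not_lt.2 (ciSup_le hcon))
    choose m hm using h1
    exact ⟨Finset.univ.sup m, fun i =>
      lt_of_lt_of_le (hm i) (hmono (Finset.le_sup (Finset.mem_univ i)))⟩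
  obtain ⟨m, hm⟩ := hx
  obtain ⟨b, hb, hb'⟩ := hg3 _ (s m).2 n φ (f ∘ x) hm a ha
  exact ⟨⟨b.1, hb.trans (hle (m + 1))⟩, hb'⟩

theorem stmt15 (le1 le2 : Ordinal → Ordinal → Prop) (h : IsR2Pair le1 le2) :
    ∀ n : ℕ, ∃ β : Fin n → Ordinal,
      ∀ (i : ℕ) (hi : i + 1 < n),
        Lt2 le2 (β ⟨i, Nat.lt_of_succ_lt hi⟩) (β ⟨i + 1, hi⟩) := by
  choose g hg1 hg2 hg3 using aux_club le1 le2
  have h0 : (0 : Ordinal) < Ordinal.omega 1 := Ordinal.omega_pos 1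
  intro n
  let s : ℕ → {x : Ordinal // x < Ordinal.omega 1} := fun n =>
    Nat.rec ⟨0, h0⟩ (fun _ p => ⟨g p.1 p.2, hg2 p.1 p.2⟩) n
  refine ⟨fun i => (s (i.1 + 1)).1, fun i hi => ?_⟩
  have hlt : (s (i + 1)).1 < (s (i + 1 + 1)).1 := hg1 _ _
  obtain ⟨ha, ha'⟩ : FullElem le1 le2 (s (i + 1)).1 (Ordinal.omega 1) := hg3 _ _
  obtain ⟨hb, hb'⟩ : FullElem le1 le2 (s (i + 1 + 1)).1 (Ordinal.omega 1) := hg3 _ _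
  refine ⟨(h.2 _ _).2 ⟨hlt.le, fun k φ _ v => ?_⟩, hlt.ne⟩
  exact (ha' k φ trivial v).trans (hb' k φ trivial (fun j => ⟨(v j).1, (v j).2.trans hlt⟩)).symm
end

section
/- The ordinal 1^∞ is ≤₁-minimal and has no <₂-successor: there is no ordinal α < 1^∞ with α <₁ 1^∞, and there is no ordinal β with 1^∞ <₂ β. -/
open FirstOrder

open FirstOrder.Language in
theorem aux_sigma1_exist {α : Type} {n : ℕ} {φ : ordLang.BoundedFormula α n}
    (h : IsSigma1 φ) : φ.IsExistential := by
  induction h with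
  | of_isQF h => exact .of_isQF h
  | ex _ ih => exact .ex ih

open FirstOrder.Language in
theorem aux_upward (le1 le2 : Ordinal → Ordinal → Prop) {a b : Ordinal} (hab : a ≤ b)
    {k : ℕ} (φ : ordLang.Formula (Fin k)) (hφ : IsSigma1 φ) (v : Fin k → {x : Ordinal // x < a})
    (h : RealizeIn le1 le2 a φ v) :
    RealizeIn le1 le2 b φ (fun j => ⟨(v j).1, lt_of_lt_of_le (v j).2 hab⟩) := by
  letI i1 := segStr le1 le2 a
  letI i2 := segStr le1 le2 b
  let f : {x : Ordinal // x < a} ↪[ordLang] {x : Ordinal // x < b} :=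
    { toFun := fun x => ⟨x.1, lt_of_lt_of_le x.2 hab⟩
      inj' := by
        intro x y hxy
        exact Subtype.ext (congrArg (fun z => z.1) hxy)
      map_fun' := fun g => Empty.elim g
      map_rel' := by
        intro n r x
        cases r <;> exact Iff.rfl }
  have := (aux_sigma1_exist hφ).realize_embedding f (v := v) (xs := default) h
  rw [show (f ∘ default) = default from Subsingleton.elim _ _] at this
  exact this

open FirstOrder.Language in
theorem aux_exs {α : Type} {n : ℕ} (φ : ordLang.BoundedFormula α n)
    (h : IsSigma1 φ) : IsSigma1 φ.exs := by
  induction n with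
  | zero => exact h
  | succ n ih => exact ih _ (.ex h)

open FirstOrder.Language in
theorem aux_iInf {α β : Type} [Finite β] {n : ℕ} (f : β → ordLang.BoundedFormula α n)
    (h : ∀ b, (f b).IsQF) : (BoundedFormula.iInf f).IsQF := by
  have key : ∀ l : List β, ((l.map f).foldr (· ⊓ ·) ⊤).IsQF := by
    intro l
    induction l with
    | nil => exact BoundedFormula.IsQF.top
    | cons a l ih => exact (h a).inf ih
  exact key _

def auxR0 : ordLang.Relations 2 := ordRel.le

def auxR1 : ordLang.Relations 2 := ordRel.le1

def auxR2 : ordLang.Relations 2 := ordRel.le2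

def auxChain (le2 : Ordinal → Ordinal → Prop) (n : ℕ) (ν : Ordinal) : Prop :=
  ∃ β : Fin n → Ordinal, (∀ i, β i < ν) ∧
    ∀ (i : ℕ) (hi : i + 1 < n), Lt2 le2 (β ⟨i, Nat.lt_of_succ_lt hi⟩) (β ⟨i + 1, hi⟩)

open FirstOrder.Language in
noncomputable def auxStep (n : ℕ) (i : {i : ℕ // i + 1 < n}) :
    ordLang.BoundedFormula (Fin 0) n :=
  (Relations.boundedFormula₂ (L := ordLang) auxR2
    (Term.var (Sum.inr ⟨i.1, Nat.lt_of_succ_lt i.2⟩)) (Term.var (Sum.inr ⟨i.1 + 1, i.2⟩))) ⊓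
  (Term.bdEqual (Term.var (Sum.inr ⟨i.1, Nat.lt_of_succ_lt i.2⟩))
    (Term.var (Sum.inr ⟨i.1 + 1, i.2⟩))).not

instance auxFinite (n : ℕ) : Finite {i : ℕ // i + 1 < n} :=
  Set.Finite.to_subtype (Set.Finite.subset (Set.finite_lt_nat n) (fun i (hi : i + 1 < n) =>
    Nat.lt_of_succ_lt hi))

noncomputable def auxForm (n : ℕ) : ordLang.Formula (Fin 0) :=
  (FirstOrder.Language.BoundedFormula.iInf (auxStep n)).exs

open FirstOrder.Language in
theorem auxForm_sigma1 (n : ℕ) : IsSigma1 (auxForm n) := by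
  apply aux_exs
  apply IsSigma1.of_isQF
  apply aux_iInf
  intro i
  exact ((BoundedFormula.IsAtomic.rel _ _).isQF).inf ((BoundedFormula.IsAtomic.equal _ _).isQF.not)

open FirstOrder.Language in
theorem auxForm_realize (le1 le2 : Ordinal → Ordinal → Prop) (n : ℕ) (a : Ordinal)
    (v : Fin 0 → {x : Ordinal // x < a}) :
    RealizeIn le1 le2 a (auxForm n) v ↔ auxChain le2 n a := by
  letI i1 := segStr le1 le2 a
  have key : ∀ (xs : Fin n → {x : Ordinal // x < a}) (i : {i : ℕ // i + 1 < n}),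
      (auxStep n i).Realize v xs ↔
        Lt2 le2 (xs ⟨i.1, Nat.lt_of_succ_lt i.2⟩).1 (xs ⟨i.1 + 1, i.2⟩).1 := by
    intro xs i
    unfold auxStep Lt2
    rw [BoundedFormula.realize_inf, BoundedFormula.realize_not, BoundedFormula.realize_rel₂,
      BoundedFormula.realize_bdEqual]
    refine and_congr Iff.rfl (not_congr ?_)
    exact Subtype.ext_iff
  unfold RealizeIn auxForm
  rw [BoundedFormula.realize_exs]
  simp only [BoundedFormula.realize_iInf, key]
  constructor
  · rintro ⟨xs, hxs⟩
    exact ⟨fun i => (xs i).1, fun i => (xs i).2, fun i hi => hxs ⟨i, hi⟩⟩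
  · rintro ⟨β, h1, h2⟩
    exact ⟨fun i => ⟨β i, h1 i⟩, fun i => h2 i.1 i.2⟩

theorem auxChain_down (le1 le2 : Ordinal → Ordinal → Prop) (h : IsR2Pair le1 le2)
    {a b : Ordinal} (hab : le1 a b) {n : ℕ} (hc : auxChain le2 n b) : auxChain le2 n a := by
  obtain ⟨hle, H⟩ := (h.1 a b).1 hab
  have := H 0 (auxForm n) (auxForm_sigma1 n) Fin.elim0
  rw [auxForm_realize, auxForm_realize] at this
  exact this.2 hc

open FirstOrder.Language in
def auxForm2 : ordLang.Formula (Fin 0) :=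
  BoundedFormula.ex (BoundedFormula.all (n := 1)
    ((Relations.boundedFormula₂ (L := ordLang) (n := 2) auxR0
      (Term.var (Sum.inr 0)) (Term.var (Sum.inr 1))).imp
    (Relations.boundedFormula₂ (L := ordLang) (n := 2) auxR1
      (Term.var (Sum.inr 0)) (Term.var (Sum.inr 1)))))

open FirstOrder.Language in
theorem auxForm2_sigma2 : IsSigma2 auxForm2 := by
  apply IsSigma2.ex
  apply IsSigma2.of_isPi1
  apply IsPi1.all
  apply IsPi1.of_isQF
  exact (BoundedFormula.IsAtomic.rel _ _).isQF.imp (BoundedFormula.IsAtomic.rel _ _).isQF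

open FirstOrder.Language in
theorem auxForm2_realize (le1 le2 : Ordinal → Ordinal → Prop) (a : Ordinal)
    (v : Fin 0 → {x : Ordinal // x < a}) :
    RealizeIn le1 le2 a auxForm2 v ↔ ∃ x < a, ∀ y < a, x ≤ y → le1 x y := by
  letI i1 := segStr le1 le2 a
  unfold RealizeIn auxForm2 FirstOrder.Language.Formula.Realize
  rw [BoundedFormula.realize_ex]
  simp only [BoundedFormula.realize_all, BoundedFormula.realize_imp, BoundedFormula.realize_rel₂]
  constructor
  · rintro ⟨x, hx⟩
    exact ⟨x.1, x.2, fun y hy hxy => hx ⟨y, hy⟩ hxy⟩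
  · rintro ⟨x, hx, H⟩
    exact ⟨⟨x, hx⟩, fun y hxy => H y.1 y.2 hxy⟩

theorem aux_sigma1_sigma2 {α : Type} {n : ℕ} {φ : ordLang.BoundedFormula α n}
    (h : IsSigma1 φ) : IsSigma2 φ := by
  induction h with
  | of_isQF h => exact .of_isPi1 (.of_isQF h)
  | ex _ ih => exact .ex ih

theorem aux_le1_of_le2 (le1 le2 : Ordinal → Ordinal → Prop) (h : IsR2Pair le1 le2)
    {a y b : Ordinal} (hab : le2 a b) (hay : a ≤ y) (hyb : y ≤ b) : le1 a y := by
  obtain ⟨hle, H⟩ := (h.2 a b).1 hab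
  refine (h.1 a y).2 ⟨hay, fun k φ hφ v => ⟨fun hr => aux_upward le1 le2 hay φ hφ v hr, fun hr => ?_⟩⟩
  have h2 : IsSigma2 φ := aux_sigma1_sigma2 hφ
  exact (H k φ h2 v).2 (aux_upward le1 le2 hyb φ hφ _ hr)

theorem aux_below (le2 : Ordinal → Ordinal → Prop) {x : Ordinal} (hx : x < OneInfty le2) :
    ∃ n, ¬ auxChain le2 n x ∧ ∀ m, auxChain le2 m (OneInfty le2) := by
  have h1 : ¬ ∀ n, auxChain le2 n x := notMem_of_lt_csInf' hx
  obtain ⟨n, hn⟩ := not_forall.1 h1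
  refine ⟨n, hn, ?_⟩
  have hne : {ν : Ordinal | ∀ n, auxChain le2 n ν}.Nonempty := by
    by_contra hne
    rw [Set.not_nonempty_iff_eq_empty] at hne
    have : OneInfty le2 = sInf {ν : Ordinal | ∀ n, auxChain le2 n ν} := rfl
    rw [this, hne, Ordinal.sInf_empty] at hx
    exact not_lt_bot hx
  exact csInf_mem hne

theorem stmt16 (le1 le2 : Ordinal → Ordinal → Prop) (h : IsR2Pair le1 le2) :
    (∀ α : Ordinal, α < OneInfty le2 → ¬ Lt1 le1 α (OneInfty le2)) ∧
    (∀ β : Ordinal, ¬ Lt2 le2 (OneInfty le2) β) := by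
  refine ⟨fun α hα hlt => ?_, fun β hlt => ?_⟩
  · obtain ⟨n, hn, H⟩ := aux_below le2 hα
    exact hn (auxChain_down le1 le2 h hlt.1 (H n))
  · obtain ⟨hle, H⟩ := (h.2 _ _).1 hlt.1
    have hlt' : OneInfty le2 < β := lt_of_le_of_ne hle hlt.2
    have H2 := H 0 auxForm2 auxForm2_sigma2 Fin.elim0
    rw [auxForm2_realize, auxForm2_realize] at H2
    obtain ⟨x, hx, hxy⟩ := H2.2 ⟨_, hlt', fun y hy hy' => aux_le1_of_le2 le1 le2 h hlt.1 hy' hy.le⟩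
    obtain ⟨n, hn, K⟩ := aux_below le2 hx
    obtain ⟨c, hc1, hc2⟩ := K (n + 1)
    have step : ∀ (i : ℕ) (hi : i + 1 < n + 1),
        c ⟨i, Nat.lt_of_succ_lt hi⟩ < c ⟨i + 1, hi⟩ := fun i hi =>
      lt_of_le_of_ne ((h.2 _ _).1 (hc2 i hi).1).1 (hc2 i hi).2
    have mono : StrictMono c := Fin.strictMono_iff_lt_succ.2 (fun i => step i.1 (by omega))
    have hch : auxChain le2 n (c (Fin.last n)) :=
      ⟨fun i => c i.castSucc, fun i => mono (Fin.castSucc_lt_last i),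
        fun i hi => hc2 i (by omega)⟩
    rcases le_or_gt x (c (Fin.last n)) with hxl | hxl
    · exact hn (auxChain_down le1 le2 h (hxy _ (hc1 _) hxl) hch)
    · obtain ⟨d, hd1, hd2⟩ := hch
      exact hn ⟨d, fun i => (hd1 i).trans hxl, hd2⟩
end
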